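/- In every MILL model, for all X and Y, entails (par X Y) (dual (tensor (dual X) (dual Y))); that is, X ⅋ Y ⊢ (X* ⊗ Y*)* is derivable in MILL, where X* denotes dual X = X ⊸ I and A ⅋ B denotes par A B = A* ⊸ B. -/

import Mathlib

/-- In every MILL model, X ⅋ Y ⊢ (X* ⊗ Y*)*. -/
theorem mill_par_tensor_dual
    {F : Type*} (entails : F → F → Prop) (tensor lollipop : F → F → F)
    (I : F) (dual : F → F) (par : F → F → F)
    (rule_i : ∀ X : F, entails X X)
    (rule_o : ∀ X Y Z : F, entails X Y → entails Y Z → entails X Z)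
    (rule_tensor : ∀ W X Y Z : F,
      entails W X → entails Y Z → entails (tensor W Y) (tensor X Z))
    (rule_a : ∀ W X Y Z : F,
      entails W (tensor (tensor X Y) Z) ↔ entails W (tensor X (tensor Y Z)))
    (rule_l : ∀ X Y : F, entails X (tensor I Y) ↔ entails X Y)
    (rule_r : ∀ X Y : F, entails X (tensor Y I) ↔ entails X Y)
    (rule_b : ∀ W X Y : F, entails W (tensor X Y) ↔ entails W (tensor Y X))
    (rule_c : ∀ X Y Z : F,
      entails (tensor X Y) Z ↔ entails Y (lollipop X Z))
    (hdual : ∀ X : F, dual X = lollipop X I)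
    (hpar : ∀ X Y : F, par X Y = lollipop (dual X) Y) :
    ∀ X Y : F, entails (par X Y) (dual (tensor (dual X) (dual Y))) := by
  intro X Y
  have eval (A B : F) : entails (tensor A (lollipop A B)) B :=
    (rule_c _ _ _).2 (rule_i _)
  have swap (A B : F) : entails (tensor A B) (tensor B A) :=
    (rule_b _ _ _).1 (rule_i _)
  have assoc (A B C : F) : entails (tensor (tensor A B) C) (tensor A (tensor B C)) :=
    (rule_a _ _ _ _).1 (rule_i _)
  have contract : entails (tensor Y (dual Y)) I := by
    rw [hdual Y]
    exact eval Y I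
  rw [hpar, hdual (tensor _ _), ← rule_c]
  refine rule_o _ _ _ (rule_tensor _ _ _ _ (swap _ _) (rule_i _)) ?_
  refine rule_o _ _ _ (assoc _ _ _) ?_
  refine rule_o _ _ _ (rule_tensor _ _ _ _ (rule_i _) (eval _ _)) ?_
  exact rule_o _ _ _ (swap _ _) contract
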